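/- The function x ↦ E_β(-x) is (strictly) decreasing on (0,∞). -/

import Mathlib

open MeasureTheory Real Set

/-- The Mittag-Leffler function `E_β(x) = ∑_{k≥0} x^k / Γ(1+βk)`. -/
noncomputable def mittagLeffler (β x : ℝ) : ℝ := ∑' k : ℕ, x ^ k / Real.Gamma (1 + β * k)

open Filter Topology

/-- Finite Gamma-type product. -/
noncomputable def mlProd (n : ℕ) (s : ℝ) : ℝ := ∏ j ∈ Finset.range n, (1 + s / ((j : ℝ) + 1))

lemma mlProd_pos (n : ℕ) {s : ℝ} (hs : 0 ≤ s) : 0 < mlProd n s :=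
  Finset.prod_pos fun j _ => by positivity

lemma mlProd_expand (β : ℝ) (hβ0 : 0 < β) (hβ1 : β < 1) (n : ℕ) :
    ∃ p : ℕ → ℝ, (∀ m, 0 ≤ p m) ∧ ∀ k : ℕ, mlProd n (β * k) =
      ∑ m ∈ Finset.range (n + 1), p m * ((k + m).choose m : ℝ) := by
  induction n with
  | zero =>
    refine ⟨fun _ => 1, fun _ => zero_le_one, fun k => ?_⟩
    simp [mlProd]
  | succ n ih =>
    obtain ⟨p, hp, h⟩ := ih
    refine ⟨fun m => (if m ≤ n then (1 - β * (m + 1) / (n + 1)) * p m else 0) +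
      β * m / (n + 1) * p (m - 1), fun m => ?_, fun k => ?_⟩
    · refine add_nonneg ?_ (mul_nonneg (by positivity) (hp _))
      split_ifs with hm
      · refine mul_nonneg ?_ (hp _)
        rw [sub_nonneg, div_le_one (by positivity)]
        have : (m : ℝ) ≤ n := by exact_mod_cast hm
        nlinarith
      · exact le_rfl
    · have h1 : mlProd (n + 1) (β * k) = mlProd n (β * k) * (1 + β * k / (n + 1)) := by
        simp [mlProd, Finset.prod_range_succ]
      rw [h1, h k]
      simp only [add_mul, Finset.sum_add_distrib]
      rw [Finset.sum_range_succ _ (n + 1), Finset.sum_range_succ' (fun m => β * (m : ℝ) / (n + 1) * p (m - 1) * ((k + m).choose m : ℝ)) (n + 1)]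
      simp only [show ¬ (n + 1 ≤ n) by omega, if_false, zero_mul, add_zero, Nat.cast_zero,
        mul_zero, zero_div, add_tsub_cancel_right]
      rw [← Finset.sum_add_distrib, Finset.sum_mul]
      refine Finset.sum_congr rfl fun m hm => ?_
      have hm' : m ≤ n := by simpa [Nat.lt_succ_iff] using hm
      rw [if_pos hm']
      have h2 : ((k : ℝ) + m + 1) * ((k + m).choose m : ℝ) =
          ((k + (m + 1)).choose (m + 1) : ℝ) * (m + 1) := by
        exact_mod_cast Nat.add_one_mul_choose_eq (k + m) m
      have hn : (n : ℝ) + 1 ≠ 0 := by positivity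
      have h3 : β * ((m + 1 : ℕ) : ℝ) / (n + 1) * p m * ((k + (m + 1)).choose (m + 1) : ℝ)
          = β / (n + 1) * p m * (((k : ℝ) + m + 1) * ((k + m).choose m : ℝ)) := by
        rw [h2]; push_cast; ring
      rw [h3]
      field_simp
      ring

lemma mlProd_hasSum (β : ℝ) (hβ0 : 0 < β) (hβ1 : β < 1) (n : ℕ) :
    ∃ p : ℕ → ℝ, (∀ m, 0 ≤ p m) ∧ ∀ r : ℝ, ‖r‖ < 1 →
      HasSum (fun k : ℕ => mlProd n (β * k) * r ^ k)
        (∑ m ∈ Finset.range (n + 1), p m * (1 / (1 - r) ^ (m + 1))) := by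
  obtain ⟨p, hp, h⟩ := mlProd_expand β hβ0 hβ1 n
  refine ⟨p, hp, fun r hr => ?_⟩
  have : (fun k : ℕ => mlProd n (β * k) * r ^ k) = fun k : ℕ =>
      ∑ m ∈ Finset.range (n + 1), p m * (((k + m).choose m : ℝ) * r ^ k) := by
    funext k
    rw [h k, Finset.sum_mul]
    exact Finset.sum_congr rfl fun m _ => by ring
  rw [this]
  exact hasSum_sum fun m _ => (hasSum_choose_mul_geometric_of_norm_lt_one m hr).mul_left (p m)

lemma mlProd_tendsto (s : ℝ) (hs : 0 ≤ s) :
    Tendsto (fun n : ℕ => mlProd n s / (n : ℝ) ^ s) atTop (𝓝 (1 / Real.Gamma (1 + s))) := by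
  rcases hs.eq_or_lt with rfl | hs
  · simp [mlProd]
  have h1 := Real.GammaSeq_tendsto_Gamma s
  have hG : s * Real.Gamma s ≠ 0 := (mul_pos hs (Real.Gamma_pos_of_pos hs)).ne'
  have h2 := (h1.const_mul s).inv₀ hG
  rw [add_comm, Real.Gamma_add_one hs.ne', one_div]
  refine h2.congr' ?_
  filter_upwards [eventually_gt_atTop 0] with n hn
  have h3 : ∏ j ∈ Finset.range (n + 1), (s + (j : ℝ)) = s * (n.factorial * mlProd n s) := by
    rw [Finset.prod_range_succ', Nat.cast_zero, add_zero, mul_comm]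
    congr 1
    rw [mlProd, ← Finset.prod_range_add_one_eq_factorial, Nat.cast_prod,
      ← Finset.prod_mul_distrib]
    refine Finset.prod_congr rfl fun j _ => ?_
    have : (j : ℝ) + 1 ≠ 0 := by positivity
    push_cast
    field_simp
    ring
  have hP := (mlProd_pos n hs.le).ne'
  have hf : (n.factorial : ℝ) ≠ 0 := by positivity
  have hn' : (n : ℝ) ^ s ≠ 0 := by positivity
  rw [Real.GammaSeq, h3]
  field_simp

lemma mlProd_step (s : ℝ) (hs : 1 ≤ s) (n : ℕ) (hn : 1 ≤ n) :
    mlProd (n + 1) s / ((n + 1 : ℕ) : ℝ) ^ s ≤ mlProd n s / (n : ℝ) ^ s := by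
  have hn0 : (0 : ℝ) < n := by exact_mod_cast hn
  have hP := mlProd_pos n (zero_le_one.trans hs)
  have h1 : mlProd (n + 1) s = mlProd n s * (1 + s / (n + 1)) := by
    simp [mlProd, Finset.prod_range_succ]
  have h2 : 1 + s / (n + 1) ≤ (1 + 1 / (n : ℝ)) ^ s := by
    have h4 := one_add_mul_self_le_rpow_one_add (s := 1 / (n : ℝ))
      (by have : (0:ℝ) ≤ 1 / n := by positivity
          linarith) hs
    have h5 : s / ((n : ℝ) + 1) ≤ s / n := by gcongr; linarith
    have h6 : s * (1 / (n : ℝ)) = s / n := by ring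
    linarith
  have h3 : ((n + 1 : ℕ) : ℝ) ^ s = (1 + 1 / (n : ℝ)) ^ s * (n : ℝ) ^ s := by
    rw [← Real.mul_rpow (by positivity) hn0.le]
    congr 1
    push_cast; field_simp
  rw [h1, h3, div_le_div_iff₀ (by positivity) (by positivity)]
  have : 0 ≤ mlProd n s * (n : ℝ) ^ s := by positivity
  nlinarith [mul_le_mul_of_nonneg_left h2 this]

lemma mlProd_anti (s : ℝ) (hs : 1 ≤ s) (n₀ n : ℕ) (hn₀ : 1 ≤ n₀) (hn : n₀ ≤ n) :
    mlProd n s / (n : ℝ) ^ s ≤ mlProd n₀ s / (n₀ : ℝ) ^ s := by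
  induction n, hn using Nat.le_induction with
  | base => exact le_rfl
  | succ n hn ih => exact (mlProd_step s hs n (hn₀.trans hn)).trans ih

lemma ml_term_eq (β x : ℝ) (n k : ℕ) :
    mlProd n (β * k) / (n : ℝ) ^ (β * k) * x ^ k =
      mlProd n (β * k) * (x / (n : ℝ) ^ β) ^ k := by
  rw [Real.rpow_mul (Nat.cast_nonneg n), Real.rpow_natCast, div_pow]
  ring

lemma ml_eventually_lt (β x : ℝ) (hβ0 : 0 < β) :
    ∀ᶠ n : ℕ in atTop, 1 ≤ n ∧ ‖x / (n : ℝ) ^ β‖ < 1 := by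
  have h := (tendsto_rpow_atTop hβ0).comp tendsto_natCast_atTop_atTop
  filter_upwards [eventually_ge_atTop 1, h.eventually_gt_atTop |x|] with n h1 h2
  refine ⟨h1, ?_⟩
  have h3 : (0 : ℝ) < (n : ℝ) ^ β := lt_of_le_of_lt (abs_nonneg x) h2
  rw [norm_div, Real.norm_eq_abs, Real.norm_eq_abs, abs_of_pos h3, div_lt_one h3]
  exact h2

lemma ml_bound (β : ℝ) (hβ0 : 0 < β) (hβ1 : β < 1) (x : ℝ) :
    ∃ B : ℕ → ℝ, Summable B ∧ ∀ᶠ n : ℕ in atTop, ∀ k : ℕ,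
      ‖mlProd n (β * k) / (n : ℝ) ^ (β * k) * x ^ k‖ ≤ B k := by
  obtain ⟨n₀, hn₀, hlt⟩ := (ml_eventually_lt β x hβ0).exists
  have hb : ∀ k : ℕ, ∃ C : ℝ, ∀ n : ℕ,
      ‖mlProd n (β * k) / (n : ℝ) ^ (β * k) * x ^ k‖ ≤ C := fun k => by
    have h := ((mlProd_tendsto (β * k) (by positivity)).mul_const (x ^ k)).norm.bddAbove_range
    obtain ⟨C, hC⟩ := h
    exact ⟨C, fun n => hC ⟨n, rfl⟩⟩
  choose C hC using hb
  obtain ⟨p, -, hs⟩ := mlProd_hasSum β hβ0 hβ1 n₀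
  have hsum := (hs _ hlt).summable.norm
  refine ⟨fun k => if 1 ≤ β * k then ‖mlProd n₀ (β * k) * (x / (n₀ : ℝ) ^ β) ^ k‖ else C k,
    ?_, ?_⟩
  · refine (summable_congr_atTop ?_).mpr hsum
    have h := (tendsto_natCast_atTop_atTop (R := ℝ)).const_mul_atTop hβ0
    filter_upwards [h.eventually_ge_atTop 1] with k hk
    rw [if_pos hk]
  · filter_upwards [eventually_ge_atTop n₀] with n hn k
    split_ifs with hk
    · rw [← ml_term_eq, norm_mul, norm_mul]
      refine mul_le_mul_of_nonneg_right ?_ (norm_nonneg _)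
      have h0 : ∀ n : ℕ, 0 ≤ mlProd n (β * k) / (n : ℝ) ^ (β * k) := fun n =>
        div_nonneg (mlProd_pos n (by positivity)).le (by positivity)
      rw [Real.norm_of_nonneg (h0 _), Real.norm_of_nonneg (h0 _)]
      exact mlProd_anti _ hk n₀ n hn₀ hn
    · exact hC k n

lemma ml_term_tendsto (β : ℝ) (hβ0 : 0 < β) (x : ℝ) (k : ℕ) :
    Tendsto (fun n : ℕ => mlProd n (β * k) / (n : ℝ) ^ (β * k) * x ^ k) atTop
      (𝓝 (x ^ k / Real.Gamma (1 + β * k))) := by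
  have h := (mlProd_tendsto (β * k) (by positivity)).mul_const (x ^ k)
  rwa [one_div, ← div_eq_inv_mul] at h

lemma ml_summable (β : ℝ) (hβ0 : 0 < β) (hβ1 : β < 1) (x : ℝ) :
    Summable (fun k : ℕ => ‖x ^ k / Real.Gamma (1 + β * k)‖) := by
  obtain ⟨B, hB, h⟩ := ml_bound β hβ0 hβ1 x
  refine Summable.of_nonneg_of_le (fun _ => norm_nonneg _) (fun k => ?_) hB
  exact le_of_tendsto (ml_term_tendsto β hβ0 x k).norm (h.mono fun n hn => hn k)

lemma ml_tendsto (β : ℝ) (hβ0 : 0 < β) (hβ1 : β < 1) (x : ℝ) :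
    Tendsto (fun n : ℕ => ∑' k : ℕ, mlProd n (β * k) / (n : ℝ) ^ (β * k) * x ^ k) atTop
      (𝓝 (mittagLeffler β x)) := by
  obtain ⟨B, hB, h⟩ := ml_bound β hβ0 hβ1 x
  exact tendsto_tsum_of_dominated_convergence hB (fun k => ml_term_tendsto β hβ0 x k) h

lemma ml_anti (β : ℝ) (hβ0 : 0 < β) (hβ1 : β < 1) {x y : ℝ} (hx : 0 < x) (hxy : x ≤ y) :
    mittagLeffler β (-y) ≤ mittagLeffler β (-x) := by
  refine le_of_tendsto_of_tendsto (ml_tendsto β hβ0 hβ1 (-y)) (ml_tendsto β hβ0 hβ1 (-x)) ?_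
  filter_upwards [ml_eventually_lt β (-x) hβ0, ml_eventually_lt β (-y) hβ0] with n hnx hny
  obtain ⟨p, hp, hs⟩ := mlProd_hasSum β hβ0 hβ1 n
  simp only [ml_term_eq]
  rw [(hs _ hnx.2).tsum_eq, (hs _ hny.2).tsum_eq]
  refine Finset.sum_le_sum fun m _ => mul_le_mul_of_nonneg_left ?_ (hp m)
  have h1 : (0 : ℝ) ≤ (n : ℝ) ^ β := by positivity
  have h2 : x / (n : ℝ) ^ β ≤ y / (n : ℝ) ^ β := by gcongr
  have h3 : 0 ≤ x / (n : ℝ) ^ β := by positivity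
  rw [neg_div, neg_div, sub_neg_eq_add, sub_neg_eq_add]
  gcongr

lemma ml_series (β : ℝ) (hβ0 : 0 < β) (hβ1 : β < 1) :
    HasFPowerSeriesOnBall (mittagLeffler β)
      (FormalMultilinearSeries.ofScalars ℝ fun k : ℕ => (Real.Gamma (1 + β * k))⁻¹) 0 ⊤ := by
  refine ⟨?_, ENNReal.zero_lt_top, fun {y} _ => ?_⟩
  · refine (FormalMultilinearSeries.radius_eq_top_of_summable_norm _ fun r => ?_).ge
    refine (ml_summable β hβ0 hβ1 r).of_nonneg_of_le (fun _ => by positivity) fun k => ?_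
    rw [FormalMultilinearSeries.ofScalars_norm, norm_div, norm_pow, norm_inv]
    simp [div_eq_inv_mul]
  · rw [zero_add]
    have h := (ml_summable β hβ0 hβ1 y).of_norm.hasSum
    simpa [FormalMultilinearSeries.ofScalars_apply_eq, mittagLeffler, div_eq_mul_inv] using h

theorem mittagLeffler_neg_strictAnti (β : ℝ) (hβ0 : 0 < β) (hβ1 : β < 1) :
    StrictAntiOn (fun x : ℝ => mittagLeffler β (-x)) (Ioi 0) := by
  intro x hx y hy hxy
  have hx' : 0 < x := hx
  refine lt_of_le_of_ne (ml_anti β hβ0 hβ1 hx hxy.le) fun heq => ?_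
  dsimp only at heq
  have hs := ml_series β hβ0 hβ1
  have han : AnalyticOnNhd ℝ (mittagLeffler β) univ := by
    have := hs.analyticOnNhd
    simpa using this
  have hev : mittagLeffler β =ᶠ[𝓝 (-((x + y) / 2))] fun _ => mittagLeffler β (-x) := by
    have hmem : Ioo (-y) (-x) ∈ 𝓝 (-((x + y) / 2)) :=
      Ioo_mem_nhds (by linarith) (by linarith)
    filter_upwards [hmem] with z hz
    have h1 := ml_anti β hβ0 hβ1 hx' (show x ≤ -z by linarith [hz.2])
    have h2 := ml_anti β hβ0 hβ1 (show 0 < -z by linarith [hz.2]) (show -z ≤ y by linarith [hz.1])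
    rw [neg_neg] at h1 h2
    linarith
  have hc := han.eq_of_eventuallyEq analyticOnNhd_const hev
  have hd := hs.hasFPowerSeriesAt.deriv
  rw [hc] at hd
  have hG : Real.Gamma (1 + β) ≠ 0 := (Real.Gamma_pos_of_pos (by linarith)).ne'
  simp [FormalMultilinearSeries.ofScalars_apply_eq] at hd
  exact hG hd.symm
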